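/- arXiv:1312.1382 — 2 statements merged into one kernel-verified Lean document; each statement's English description precedes it below -/
import Mathlib

section
/- Let G = (V,E) be a finite simple undirected graph with at least one edge. Then there exists an orientation of G whose maximum out-degree Δ satisfies Δ ≤ α(G). -/
open Finset

structure GraphOrientation {V : Type*} [Fintype V] [DecidableEq V] (G : SimpleGraph V) where
  dir : V → V → Bool
  dir_iff : ∀ u v, G.Adj u v ↔ (dir u v ∨ dir v u)
  asymm : ∀ u v, dir u v → ¬ dir v u

namespace GraphOrientation
variable {V : Type*} [Fintype V] [DecidableEq V] {G : SimpleGraph V}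

/-- The out-degree of `u` under orientation `D`. -/
def outDeg (D : GraphOrientation G) (u : V) : ℕ :=
  (Finset.univ.filter fun v => D.dir u v).card

/-- The maximum out-degree `Δ` of the orientation. -/
def maxOutDeg (D : GraphOrientation G) : ℕ :=
  Finset.univ.sup D.outDeg

/-- The edge oriented `u → v` is valid: `d⁺(u) ≤ d⁺(v) + 1`. -/
def Valid (D : GraphOrientation G) (u v : V) : Prop :=
  D.dir u v ∧ D.outDeg u ≤ D.outDeg v + 1

instance (D : GraphOrientation G) (u : V) : DecidablePred (D.Valid u) := by
  unfold Valid; infer_instance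

end GraphOrientation

/-- The set `E(U)` of edges of `G` with both endpoints in `U`. -/
def edgesIn {V : Type*} [Fintype V] [DecidableEq V] (G : SimpleGraph V)
    [DecidableRel G.Adj] (U : Finset V) : Finset (Sym2 V) :=
  G.edgeFinset ∩ U.sym2

/-- The arboricity `α(G) = max_{U ⊆ V, |U| ≥ 2} ⌈|E(U)|/(|U|-1)⌉`. -/
def arboricity {V : Type*} [Fintype V] [DecidableEq V] (G : SimpleGraph V)
    [DecidableRel G.Adj] : ℕ :=
  Finset.univ.sup fun U : Finset V =>
    if 2 ≤ U.card then ⌈((edgesIn G U).card : ℚ) / ((U.card : ℚ) - 1)⌉₊ else 0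

/-!
Orienting an edge out of `v` amounts to choosing `v` as its tail, so the out-degree of `v` is the
number of edges having `v` as tail. Hall's theorem with `c v` copies of each vertex `v` lets every
edge choose one of its endpoints without exceeding the capacities `c` as soon as
`|E(U)| ≤ ∑ v ∈ U, c v` for all `U`. The constant capacity `α(G)` qualifies, because
`|E(U)| ≤ α(G) (|U| - 1)` for nonempty `U`.
-/

theorem exists_mem_encard_preimage_le_of_card_le_sum {ι α : Type*} [DecidableEq α]
    (t : ι → Finset α) (c : α → ℕ) (h : ∀ s : Finset ι, #s ≤ ∑ a ∈ s.biUnion t, c a) :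
    ∃ f : ι → α, (∀ i, f i ∈ t i) ∧ ∀ a, (f ⁻¹' {a}).encard ≤ c a := by
  let copies (S : Finset α) : Finset (Σ a, Fin (c a)) := S.sigma fun _ => univ
  have card_copies (S : Finset α) : #(copies S) = ∑ a ∈ S, c a := by
    simp only [copies, card_sigma, card_univ, Fintype.card_fin]
  have biUnion_copies (s : Finset ι) :
      (s.biUnion fun i => copies (t i)) = copies (s.biUnion t) := by
    ext
    simp only [copies, mem_biUnion, mem_sigma, mem_univ, and_true]
  obtain ⟨g, g_injective, g_mem⟩ :=
    (all_card_le_biUnion_card_iff_exists_injective fun i => copies (t i)).1 fun s => by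
      rw [biUnion_copies, card_copies]
      exact h s
  refine ⟨fun i => (g i).1, fun i => (mem_sigma.1 (g_mem i)).1, fun a => ?_⟩
  have mapsTo_copies : Set.MapsTo g ((fun i => (g i).1) ⁻¹' {a}) (copies {a}) := fun _ hi =>
    mem_sigma.2 ⟨mem_singleton.2 hi, mem_univ _⟩
  calc ((fun i => (g i).1) ⁻¹' {a}).encard
    _ ≤ (copies {a} : Set (Σ b, Fin (c b))).encard :=
      Set.encard_le_encard_of_injOn mapsTo_copies g_injective.injOn
    _ = c a := by rw [Set.encard_coe_eq_coe_finsetCard, card_copies, sum_singleton]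

section

variable {V : Type*} [Fintype V] [DecidableEq V] {G : SimpleGraph V} [DecidableRel G.Adj]

theorem mem_edgesIn {U : Finset V} {e : Sym2 V} :
    e ∈ edgesIn G U ↔ e ∈ G.edgeSet ∧ ∀ v ∈ e, v ∈ U := by
  rw [edgesIn, mem_inter, SimpleGraph.mem_edgeFinset, mem_sym2_iff]

theorem edgesIn_eq_empty_of_card_le_one {U : Finset V} (hU : #U ≤ 1) : edgesIn G U = ∅ := by
  refine eq_empty_of_forall_notMem fun e => e.ind fun u v he => ?_
  obtain ⟨hadj, hmem⟩ := mem_edgesIn.1 he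
  exact G.ne_of_adj hadj
    (card_le_one.1 hU u (hmem u (Sym2.mem_mk_left u v)) v (hmem v (Sym2.mem_mk_right u v)))

theorem card_edgesIn_le_arboricity_mul_card_sub_one (U : Finset V) :
    #(edgesIn G U) ≤ arboricity G * (#U - 1) := by
  rcases le_or_gt #U 1 with hU | hU
  · simp only [edgesIn_eq_empty_of_card_le_one hU, card_empty, zero_le]
  · have ceil_le : ⌈(#(edgesIn G U) : ℚ) / ((#U : ℚ) - 1)⌉₊ ≤ arboricity G :=
      (if_pos (show 2 ≤ #U from hU)).symm.trans_le (le_sup (f := fun U : Finset V =>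
        if 2 ≤ #U then ⌈(#(edgesIn G U) : ℚ) / ((#U : ℚ) - 1)⌉₊ else 0) (mem_univ U))
    have hpos : (0 : ℚ) < #U - 1 := sub_pos.2 (by exact_mod_cast hU)
    have hcast : (#(edgesIn G U) : ℚ) ≤ arboricity G * ((#U : ℚ) - 1) :=
      (div_le_iff₀ hpos).1 (Nat.ceil_le.1 ceil_le)
    rw [← Nat.cast_pred (by lia)] at hcast
    exact_mod_cast hcast

theorem card_le_card_edgesIn_biUnion_toFinset (s : Finset G.edgeSet) :
    #s ≤ #(edgesIn G (s.biUnion fun e => (e : Sym2 V).toFinset)) := by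
  refine card_le_card_of_injOn Subtype.val (fun e he => ?_) Subtype.val_injective.injOn
  exact mem_edgesIn.2 ⟨e.2, fun v hv => mem_biUnion.2 ⟨e, he, Sym2.mem_toFinset.2 hv⟩⟩

namespace GraphOrientation

/-- The orientation of `G` in which every edge `e` leaves its chosen endpoint `t e`, so that
constructing an orientation reduces to choosing the tails of the edges. -/
def ofTail (t : G.edgeSet → V) (ht : ∀ e : G.edgeSet, t e ∈ (e : Sym2 V)) :
    GraphOrientation G where
  dir u v := decide (∃ h : G.Adj u v, t ⟨s(u, v), h⟩ = u)
  dir_iff u v := by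
    simp only [decide_eq_true_eq]
    refine ⟨fun h => ?_, ?_⟩
    · refine (Sym2.mem_iff.1 (ht ⟨s(u, v), h⟩)).imp (fun hu => ⟨h, hu⟩) fun hv => ⟨h.symm, ?_⟩
      simpa only [Sym2.eq_swap] using hv
    · rintro (⟨h, -⟩ | ⟨h, -⟩)
      exacts [h, h.symm]
  asymm u v := by
    simp only [decide_eq_true_eq]
    rintro ⟨h, hu⟩ ⟨_, hv⟩
    refine h.ne (hu.symm.trans ?_)
    simpa only [Sym2.eq_swap] using hv

theorem dir_ofTail {t : G.edgeSet → V} {ht : ∀ e : G.edgeSet, t e ∈ (e : Sym2 V)} {u v : V} :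
    (ofTail t ht).dir u v ↔ ∃ h : G.Adj u v, t ⟨s(u, v), h⟩ = u :=
  decide_eq_true_iff

theorem outDeg_ofTail (t : G.edgeSet → V) (ht : ∀ e : G.edgeSet, t e ∈ (e : Sym2 V)) (u : V) :
    ((ofTail t ht).outDeg u : ℕ∞) = (t ⁻¹' {u}).encard := by
  have image_eq : (s(u, ·)) '' {v | (ofTail t ht).dir u v} = Subtype.val '' (t ⁻¹' {u}) := by
    ext e
    constructor
    · rintro ⟨v, hv, rfl⟩
      obtain ⟨hadj, htail⟩ := dir_ofTail.1 hv
      exact ⟨⟨s(u, v), hadj⟩, htail, rfl⟩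
    · rintro ⟨e, rfl, rfl⟩
      obtain ⟨v, hv⟩ := ht e
      exact ⟨v, dir_ofTail.2 ⟨G.mem_edgeSet.1 (hv ▸ e.2), congrArg t (Subtype.ext hv.symm)⟩,
        hv.symm⟩
  have mk_injective : Function.Injective (s(u, ·)) := fun _ _ => Sym2.congr_right.1
  rw [← Subtype.val_injective.encard_image, ← image_eq, mk_injective.encard_image, outDeg,
    ← Set.encard_coe_eq_coe_finsetCard, coe_filter_univ]

theorem exists_outDeg_le_of_card_edgesIn_le_sum (c : V → ℕ)
    (h : ∀ U : Finset V, #(edgesIn G U) ≤ ∑ v ∈ U, c v) :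
    ∃ D : GraphOrientation G, ∀ v, D.outDeg v ≤ c v := by
  obtain ⟨t, ht, hc⟩ := exists_mem_encard_preimage_le_of_card_le_sum
    (fun e : G.edgeSet => (e : Sym2 V).toFinset) c
    fun s => (card_le_card_edgesIn_biUnion_toFinset s).trans (h _)
  refine ⟨ofTail t fun e => Sym2.mem_toFinset.1 (ht e), fun v => ?_⟩
  exact_mod_cast (outDeg_ofTail t _ v).trans_le (hc v)

end GraphOrientation

end

/-- Every graph with at least one edge admits an orientation whose
maximum out-degree is at most its arboricity. -/
theorem exists_orientation_max_outDeg_le_arboricity {V : Type*} [Fintype V] [DecidableEq V]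
    (G : SimpleGraph V) [DecidableRel G.Adj] (hE : G.edgeSet.Nonempty) :
    ∃ D : GraphOrientation G, D.maxOutDeg ≤ arboricity G := by
  have capacity (U : Finset V) : #(edgesIn G U) ≤ ∑ _v ∈ U, arboricity G :=
    calc #(edgesIn G U)
      _ ≤ arboricity G * (#U - 1) := card_edgesIn_le_arboricity_mul_card_sub_one U
      _ ≤ arboricity G * #U := Nat.mul_le_mul_left _ (Nat.sub_le _ _)
      _ = ∑ _v ∈ U, arboricity G := by rw [sum_const, smul_eq_mul, mul_comm]
  obtain ⟨D, hD⟩ := GraphOrientation.exists_outDeg_le_of_card_edgesIn_le_sum _ capacity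
  exact ⟨D, Finset.sup_le fun v _ => hD v⟩
end

section
/- Let D be an orientation of a finite simple graph G in which every edge is valid, let u, v be distinct vertices with {u,v} ∉ E and d⁺_D(u) ≤ d⁺_D(v), let D' be the orientation of G + {u,v} that agrees with D on E and orients the new edge as u→v, and suppose some edge {u,v'} (with v' ≠ v), oriented u→v' in D', is violated in D'. Let D'' be the orientation of G'' = (G + {u,v}) − {u,v'} obtained by restricting D'. Then every edge of G'' is valid in D'', d⁺_{D''}(u) = d⁺_D(u), and d⁺_{D''}(v') = d⁺_{D''}(u) − 1. -/
open Finset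

/-!
Replacing the arc `u → v'` by the new arc `u → v` changes no out-degree, so an edge of `G''` is
valid as soon as its endpoints satisfy the degree inequality in `D`. In `D` that inequality reads
`d⁺(u) ≤ d⁺(v') + 1` for `u → v'`; inserting `u → v` raises only `d⁺(u)`, and only by one, so
`u → v'` can become violated only if equality holds.
-/

theorem sup_edge_deleteEdges_of_not_adj {V : Type*} {G : SimpleGraph V} {u v : V}
    (h : ¬G.Adj u v) :
    (G ⊔ SimpleGraph.edge u v).deleteEdges {s(u, v)} = G :=
  ((SimpleGraph.disjoint_edge G).2 h).sup_sdiff_cancel_right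

namespace GraphOrientation

variable {V : Type*} [Fintype V] [DecidableEq V] {G G' G'' : SimpleGraph V}
  {D : GraphOrientation G} {D' : GraphOrientation G'} {D'' : GraphOrientation G''} {u v w : V}

theorem adj_of_dir (D : GraphOrientation G) (h : D.dir u v) : G.Adj u v :=
  (D.dir_iff u v).2 (Or.inl h)

/-- `D` is obtained from `D'` by deleting the arc `u → w`, i.e. `D'` from `D` by inserting it. The
relation involves only the sets of arcs, so it compares orientations of different graphs. -/
structure IsArcDeletion (D : GraphOrientation G) (D' : GraphOrientation G') (u w : V) : Prop where
  dir_arc : D'.dir u w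
  dir_iff_dir_and : ∀ a b, D.dir a b ↔ D'.dir a b ∧ ¬(a = u ∧ b = w)

theorem isArcDeletion_of_eq_deleteEdges (hG : G = G'.deleteEdges {s(u, w)}) (harc : D'.dir u w)
    (hagree : ∀ a b, G.Adj a b → D.dir a b = D'.dir a b) : D.IsArcDeletion D' u w := by
  have hadj {a b : V} (hab : D'.dir a b) : G.Adj a b ↔ ¬(a = u ∧ b = w) := by
    have hrev : ¬(a = w ∧ b = u) := by
      rintro ⟨rfl, rfl⟩
      exact D'.asymm _ _ harc hab
    simp only [hG, SimpleGraph.deleteEdges_adj, D'.adj_of_dir hab, Set.mem_singleton_iff,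
      Sym2.eq_iff, hrev, or_false, true_and]
  refine ⟨harc, fun a b => ⟨fun hab => ?_, fun ⟨hab, hne⟩ => ?_⟩⟩
  · have hab' : D'.dir a b := hagree a b (D.adj_of_dir hab) ▸ hab
    exact ⟨hab', (hadj hab').1 (D.adj_of_dir hab)⟩
  · exact (hagree a b ((hadj hab).2 hne)).symm ▸ hab

theorem isArcDeletion_of_sup_edge {D' : GraphOrientation (G ⊔ SimpleGraph.edge u v)}
    (hne : ¬G.Adj u v) (hnew : D'.dir u v) (hagree : ∀ a b, G.Adj a b → D'.dir a b = D.dir a b) :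
    D.IsArcDeletion D' u v :=
  isArcDeletion_of_eq_deleteEdges (sup_edge_deleteEdges_of_not_adj hne).symm hnew
    fun a b hab => (hagree a b hab).symm

namespace IsArcDeletion

theorem outDeg_eq_add_single (h : D.IsArcDeletion D' u w) :
    D'.outDeg = D.outDeg + Pi.single u 1 := by
  funext a
  obtain rfl | ha := eq_or_ne a u
  · have hinsert :
        (univ.filter fun b => D'.dir a b) = insert w (univ.filter fun b => D.dir a b) := by
      ext b
      obtain rfl | hb := eq_or_ne b w
      · simp [h.dir_arc]
      · simp [h.dir_iff_dir_and, hb]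
    have hw : w ∉ (univ.filter fun b => D.dir a b) := by simp [h.dir_iff_dir_and]
    simp only [outDeg, hinsert, card_insert_of_notMem hw, Pi.add_apply, Pi.single_eq_same]
  · simp [outDeg, h.dir_iff_dir_and, ha]

theorem outDeg_eq_of_common_tail (h : D.IsArcDeletion D' u v) (h'' : D''.IsArcDeletion D' u w) :
    D''.outDeg = D.outDeg :=
  add_right_cancel (h''.outDeg_eq_add_single.symm.trans h.outDeg_eq_add_single)

theorem outDeg_le_outDeg_add_one (h : D.IsArcDeletion D' u v)
    (hvalid : ∀ a b, D.dir a b → D.outDeg a ≤ D.outDeg b + 1)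
    (huv : D.outDeg u ≤ D.outDeg v + 1) {a b : V} (hab : D'.dir a b) :
    D.outDeg a ≤ D.outDeg b + 1 := by
  by_cases hnew : a = u ∧ b = v
  · obtain ⟨rfl, rfl⟩ := hnew
    exact huv
  · exact hvalid a b ((h.dir_iff_dir_and a b).2 ⟨hab, hnew⟩)

theorem outDeg_lt_of_violated (h : D.IsArcDeletion D' u v)
    (hviol : ¬D'.outDeg u ≤ D'.outDeg w + 1) : D.outDeg w < D.outDeg u := by
  have hwu : w ≠ u := by
    rintro rfl
    omega
  have hu' : D'.outDeg u = D.outDeg u + 1 := by simp [h.outDeg_eq_add_single]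
  have hw' : D'.outDeg w = D.outDeg w := by simp [h.outDeg_eq_add_single, hwu]
  omega

end IsArcDeletion

end GraphOrientation

theorem insert_flip_valid_general {V : Type*} [Fintype V] [DecidableEq V]
    {G G' G'' : SimpleGraph V} {D : GraphOrientation G} {D' : GraphOrientation G'}
    {D'' : GraphOrientation G''} {u v v' : V}
    (hD : D.IsArcDeletion D' u v) (hD'' : D''.IsArcDeletion D' u v')
    (hvalid : ∀ a b : V, D.dir a b → D.outDeg a ≤ D.outDeg b + 1)
    (hdeg : D.outDeg u ≤ D.outDeg v + 1)
    (hviol : ¬D'.outDeg u ≤ D'.outDeg v' + 1) :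
    (∀ a b : V, D''.dir a b → D''.outDeg a ≤ D''.outDeg b + 1) ∧
      D''.outDeg u = D.outDeg u ∧
      D''.outDeg v' + 1 = D''.outDeg u := by
  rw [hD.outDeg_eq_of_common_tail hD'']
  have hle {a b : V} (hab : D'.dir a b) : D.outDeg a ≤ D.outDeg b + 1 :=
    hD.outDeg_le_outDeg_add_one hvalid hdeg hab
  have hlt : D.outDeg v' < D.outDeg u := hD.outDeg_lt_of_violated hviol
  exact ⟨fun a b hab => hle ((hD''.dir_iff_dir_and a b).1 hab).1, rfl,
    (hle hD''.dir_arc).antisymm' hlt⟩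

/-- Insert a non-edge `{u,v}` (with `d⁺(u) ≤ d⁺(v)`) into a graph all of
whose edges are valid, orienting it `u → v`; suppose the edge `{u,v'}` (`v' ≠ v`),
oriented `u → v'`, is violated in the new orientation `D'`. Restrict `D'` to
`G'' = (G + {u,v}) − {u,v'}`, obtaining `D''`. Then every edge of `G''` is valid in
`D''`, `d⁺_{D''}(u) = d⁺_D(u)`, and `d⁺_{D''}(v') = d⁺_{D''}(u) − 1`. -/
theorem insert_flip_valid {V : Type*} [Fintype V] [DecidableEq V]
    (G : SimpleGraph V) (u v : V) (huv : u ≠ v) (hne : ¬ G.Adj u v)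
    (D : GraphOrientation G)
    (hvalid : ∀ a b : V, D.dir a b → D.outDeg a ≤ D.outDeg b + 1)
    (hdeg : D.outDeg u ≤ D.outDeg v)
    (D' : GraphOrientation (G ⊔ SimpleGraph.edge u v))
    (hagree : ∀ a b : V, G.Adj a b → D'.dir a b = D.dir a b)
    (hnew : D'.dir u v)
    (v' : V) (hv' : v' ≠ v) (hdir : D'.dir u v')
    (hviol : ¬ D'.outDeg u ≤ D'.outDeg v' + 1)
    (D'' : GraphOrientation ((G ⊔ SimpleGraph.edge u v).deleteEdges {s(u, v')}))
    (hagree'' : ∀ a b : V,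
      ((G ⊔ SimpleGraph.edge u v).deleteEdges {s(u, v')}).Adj a b →
        D''.dir a b = D'.dir a b) :
    (∀ a b : V, D''.dir a b → D''.outDeg a ≤ D''.outDeg b + 1) ∧
      D''.outDeg u = D.outDeg u ∧
      D''.outDeg v' + 1 = D''.outDeg u :=
  insert_flip_valid_general (GraphOrientation.isArcDeletion_of_sup_edge hne hnew hagree)
    (GraphOrientation.isArcDeletion_of_eq_deleteEdges rfl hdir hagree'') hvalid hdeg.step hviol
end
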